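/- arXiv:1306.2778 — 5 statements merged into one kernel-verified Lean document; each statement's English description precedes it below -/
import Mathlib

section
/- Let α ∈ (0,1) and λ > 0. Then for every t > 0, the function t ↦ E_{α,1}(-λ t^α) is differentiable and d/dt E_{α,1}(-λ t^α) = -λ t^{α-1} E_{α,α}(-λ t^α). -/
/-- The (real) Mittag-Leffler function `E_{α,β}(x) = ∑_{k=0}^∞ x^k / Γ(αk + β)`.
Terms where `αk + β` is a pole of `Γ` vanish, since Mathlib's `Real.Gamma`
is zero at nonpositive integers. -/
noncomputable def mittagLeffler (α β x : ℝ) : ℝ :=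
  ∑' k : ℕ, x ^ k / Real.Gamma (α * k + β)

/-!
The reciprocal Gamma function satisfies `1 / Γ(s) = s / Γ(s + 1)` for every real `s`, with the value
`0` at the poles. Taken at `s = α(k + 1) + β - 1`, this turns the termwise derivative of `E_{α,β}`
into `α⁻¹ (E_{α,α+β-1} - (β - 1) E_{α,α+β})`, which for `β = 1` is `α⁻¹ E_{α,α}`.

The series is entire by the ratio test, since `Γ(x) / Γ(x + α) → 0` as `x → ∞`: the slope of the
convex function `log Γ` on `[x, x + 1]` is `log x`, so `log Γ` increases by at least `α log x` on
`[x + 1, x + 1 + α]`.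
-/

open Filter FormalMultilinearSeries
open scoped Topology

theorem rpow_mul_Gamma_add_one_le {x a : ℝ} (hx : 0 < x) (ha : 0 ≤ a) :
    x ^ a * Real.Gamma (x + 1) ≤ Real.Gamma (x + 1 + a) := by
  obtain rfl | ha := ha.eq_or_lt
  · simp
  have hΓ : 0 < Real.Gamma (x + 1) := Real.Gamma_pos_of_pos (by positivity)
  have hΓ' : 0 < Real.Gamma (x + 1 + a) := Real.Gamma_pos_of_pos (by positivity)
  have left_slope : Real.log (Real.Gamma (x + 1)) - Real.log (Real.Gamma x) = Real.log x := by
    rw [Real.Gamma_add_one hx.ne', Real.log_mul hx.ne' (Real.Gamma_pos_of_pos hx).ne',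
      add_sub_cancel_right]
  have slope_le : Real.log x ≤
      (Real.log (Real.Gamma (x + 1 + a)) - Real.log (Real.Gamma (x + 1))) / a := by
    simpa [left_slope] using Real.convexOn_log_Gamma.slope_mono_adjacent (x := x) (y := x + 1)
      (z := x + 1 + a) hx (show 0 < x + 1 + a by positivity) (by simp) (by simpa)
  rw [← Real.log_le_log_iff (by positivity) hΓ', Real.log_mul (by positivity) hΓ.ne',
    Real.log_rpow hx]
  linarith [(le_div_iff₀ ha).mp slope_le]

theorem tendsto_Gamma_div_Gamma_add_atTop {a : ℝ} (ha : 0 < a) :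
    Tendsto (fun x : ℝ => Real.Gamma x / Real.Gamma (x + a)) atTop (𝓝 0) := by
  have bound_tendsto : Tendsto (fun x : ℝ => (x - 1) ^ (-a)) atTop (𝓝 0) :=
    (tendsto_rpow_neg_atTop ha).comp (tendsto_atTop_add_const_right _ (-1) tendsto_id)
  refine squeeze_zero' ?_ ?_ bound_tendsto
  · filter_upwards [eventually_gt_atTop 0] with x hx
    exact div_nonneg (Real.Gamma_pos_of_pos hx).le (Real.Gamma_pos_of_pos (by positivity)).le
  · filter_upwards [eventually_gt_atTop 1] with x hx
    have hx' : 0 < x - 1 := sub_pos.mpr hx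
    have growth : (x - 1) ^ a * Real.Gamma x ≤ Real.Gamma (x + a) := by
      simpa using rpow_mul_Gamma_add_one_le hx' ha.le
    rw [div_le_iff₀ (Real.Gamma_pos_of_pos (by linarith)), Real.rpow_neg hx'.le]
    exact (le_inv_mul_iff₀ (by positivity)).mpr growth

theorem inv_Gamma_eq_mul_inv_Gamma_add_one (s : ℝ) :
    (Real.Gamma s)⁻¹ = s * (Real.Gamma (s + 1))⁻¹ := by
  obtain rfl | hs := eq_or_ne s 0
  · simp
  · rw [Real.Gamma_add_one hs, mul_inv, mul_inv_cancel_left₀ hs]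

theorem hasDerivAt_formalMultilinearSeries_sum {𝕜 F : Type*} [NontriviallyNormedField 𝕜]
    [NormedAddCommGroup F] [NormedSpace 𝕜 F] [CompleteSpace F]
    (p : FormalMultilinearSeries 𝕜 𝕜 F) {x : 𝕜} (hx : ‖x‖ₑ < p.radius) :
    HasDerivAt p.sum (∑' n : ℕ, x ^ n • (n + 1) • p.coeff (n + 1)) x := by
  have summable_derivSeries : Summable fun n : ℕ => p.derivSeries n fun _ => x :=
    p.derivSeries.summable <| by
      simpa using hx.trans_le p.radius_le_radius_derivSeries
  have apply_one : p.derivSeries.sum x 1 = ∑' n : ℕ, x ^ n • (n + 1) • p.coeff (n + 1) := by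
    refine ((ContinuousLinearMap.apply 𝕜 F 1).map_tsum summable_derivSeries).trans ?_
    simp only [ContinuousLinearMap.apply_apply, apply_eq_pow_smul_coeff,
      _root_.smul_apply, derivSeries_coeff_one]
  exact apply_one ▸ (FormalMultilinearSeries.hasFDerivAt_sum hx).hasDerivAt

/-- The power series at `0` of the Mittag-Leffler function `E_{α,β}`, as a formal series so that
Mathlib's radius of convergence applies. Coefficients at the poles of `Γ` are `0⁻¹ = 0`. -/
noncomputable def mittagLefflerSeries (α β : ℝ) : FormalMultilinearSeries ℝ ℝ ℝ :=
  ofScalars ℝ fun k : ℕ => (Real.Gamma (α * k + β))⁻¹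

theorem mittagLefflerSeries_sum (α β : ℝ) :
    (mittagLefflerSeries α β).sum = mittagLeffler α β := by
  ext x
  exact (ofScalars_sum_eq _ x).trans (tsum_congr fun k => inv_mul_eq_div _ _)

theorem mittagLefflerSeries_radius {α : ℝ} (hα : 0 < α) (β : ℝ) :
    (mittagLefflerSeries α β).radius = ⊤ := by
  have arg_tendsto : Tendsto (fun k : ℕ => α * k + β) atTop atTop :=
    tendsto_atTop_add_const_right _ _ (tendsto_natCast_atTop_atTop.const_mul_atTop hα)
  apply ofScalars_radius_eq_top_of_tendsto
  · filter_upwards [arg_tendsto.eventually_gt_atTop 0] with k hk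
    exact inv_ne_zero (Real.Gamma_pos_of_pos hk).ne'
  · have ratio_tendsto := ((tendsto_Gamma_div_Gamma_add_atTop hα).comp arg_tendsto).norm
    rw [norm_zero] at ratio_tendsto
    refine ratio_tendsto.congr fun k => ?_
    have succ_arg : α * (k + 1 : ℕ) + β = α * k + β + α := by push_cast; ring
    rw [← norm_div, inv_div_inv, Nat.succ_eq_add_one, succ_arg, Function.comp_apply]

theorem summable_mittagLeffler {α : ℝ} (hα : 0 < α) (β x : ℝ) :
    Summable fun k : ℕ => x ^ k / Real.Gamma (α * k + β) := by
  have series_summable := (mittagLefflerSeries α β).summable (x := x)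
    (by simp [mittagLefflerSeries_radius hα])
  simpa only [mittagLefflerSeries, ofScalars_apply_eq, smul_eq_mul, inv_mul_eq_div]
    using series_summable

theorem add_one_mul_inv_Gamma_eq {α : ℝ} (hα : α ≠ 0) (β s : ℝ) :
    (s + 1) * (Real.Gamma (α * (s + 1) + β))⁻¹ =
      α⁻¹ * ((Real.Gamma (α * s + (α + β - 1)))⁻¹ -
        (β - 1) * (Real.Gamma (α * s + (α + β)))⁻¹) := by
  rw [inv_Gamma_eq_mul_inv_Gamma_add_one (α * s + (α + β - 1)),
    show α * s + (α + β - 1) + 1 = α * s + (α + β) by ring,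
    show α * (s + 1) + β = α * s + (α + β) by ring]
  field

theorem hasDerivAt_mittagLeffler {α : ℝ} (hα : 0 < α) (β x : ℝ) :
    HasDerivAt (mittagLeffler α β)
      (α⁻¹ * (mittagLeffler α (α + β - 1) x - (β - 1) * mittagLeffler α (α + β) x)) x := by
  have termwise := hasDerivAt_formalMultilinearSeries_sum (mittagLefflerSeries α β) (x := x)
    (by simp [mittagLefflerSeries_radius hα])
  rw [mittagLefflerSeries_sum] at termwise
  refine termwise.congr_deriv ?_
  calc ∑' k : ℕ, x ^ k • (k + 1) • (mittagLefflerSeries α β).coeff (k + 1)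
      = ∑' k : ℕ, α⁻¹ * (x ^ k / Real.Gamma (α * k + (α + β - 1)) -
          (β - 1) * (x ^ k / Real.Gamma (α * k + (α + β)))) := by
        refine tsum_congr fun k => ?_
        simp only [mittagLefflerSeries, coeff_ofScalars, nsmul_eq_mul, smul_eq_mul, Nat.cast_succ,
          add_one_mul_inv_Gamma_eq hα.ne']
        ring
    _ = α⁻¹ * (mittagLeffler α (α + β - 1) x - (β - 1) * mittagLeffler α (α + β) x) := by
        rw [tsum_mul_left, (summable_mittagLeffler hα _ x).tsum_sub
          ((summable_mittagLeffler hα _ x).mul_left _), tsum_mul_left, mittagLeffler, mittagLeffler]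

theorem hasDerivAt_mittagLeffler_one {α : ℝ} (hα : 0 < α) (x : ℝ) :
    HasDerivAt (mittagLeffler α 1) (α⁻¹ * mittagLeffler α α x) x := by
  simpa using hasDerivAt_mittagLeffler hα 1 x

theorem hasDerivAt_mittagLeffler_neg_lambda_rpow_general {α : ℝ} (hα : 0 < α) (lam : ℝ) {t : ℝ}
    (ht : 0 < t) :
    HasDerivAt (fun s : ℝ => mittagLeffler α 1 (-lam * s ^ α))
      (-lam * t ^ (α - 1) * mittagLeffler α α (-lam * t ^ α)) t := by
  have inner : HasDerivAt (fun s : ℝ => -lam * s ^ α) (-lam * (α * t ^ (α - 1))) t :=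
    (Real.hasDerivAt_rpow_const (Or.inl ht.ne')).const_mul (-lam)
  refine ((hasDerivAt_mittagLeffler_one hα _).comp t inner).congr_deriv ?_
  field

/-- For `α ∈ (0,1)`, `λ > 0` and `t > 0`, the function `t ↦ E_{α,1}(-λ t^α)` is
differentiable with derivative `-λ t^{α-1} E_{α,α}(-λ t^α)`. -/
theorem hasDerivAt_mittagLeffler_neg_lambda_rpow
    (α lam : ℝ) (hα : α ∈ Set.Ioo (0 : ℝ) 1) (hlam : 0 < lam)
    (t : ℝ) (ht : 0 < t) :
    HasDerivAt (fun s : ℝ => mittagLeffler α 1 (-lam * s ^ α))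
      (-lam * t ^ (α - 1) * mittagLeffler α α (-lam * t ^ α)) t := by
  exact hasDerivAt_mittagLeffler_neg_lambda_rpow_general hα.1 lam ht
end

section
/- Let 0 < α₂ < α₁ < 1. Then the function η ↦ (1-η)^{α₁-2} (η^{-α₂} - 1) is nonnegative on (0,1) and integrable on (0,1); that is, ∫_0^1 (1-η)^{α₁-2} (η^{-α₂} - 1) dη < ∞. -/
open Set MeasureTheory

/-!
For `α₂ ≤ 1` and `η ∈ (0, 1)` we have `η ^ (-α₂) * η = η ^ (1 - α₂) ≤ 1`, that is,
`η ^ (-α₂) - 1 ≤ η ^ (-α₂) * (1 - η)`. The factor `1 - η` absorbs one order of the singularity at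
`1`, so on the whole interval the kernel lies between `0` and `η ^ (-α₂) * (1 - η) ^ (α₁ - 1)`, the
integrand of the convergent Beta integral `B(1 - α₂, α₁)`.
-/

theorem integrableOn_rpow_mul_one_sub_rpow {a b : ℝ} (ha : -1 < a) (hb : -1 < b) :
    IntegrableOn (fun x : ℝ => x ^ a * (1 - x) ^ b) (Ioo 0 1) := by
  have hbeta := Complex.betaIntegral_convergent (u := (a + 1 : ℝ)) (v := (b + 1 : ℝ))
    (by rw [Complex.ofReal_re]; linarith) (by rw [Complex.ofReal_re]; linarith)
  rw [intervalIntegrable_iff_integrableOn_Ioo_of_le zero_le_one] at hbeta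
  refine IntegrableOn.congr_fun hbeta.norm (fun x hx => ?_) measurableSet_Ioo
  have hcast : (1 : ℂ) - x = (1 - x : ℝ) := by push_cast; rfl
  simp only [hcast, norm_mul, Complex.norm_cpow_eq_rpow_re_of_pos hx.1,
    Complex.norm_cpow_eq_rpow_re_of_pos (sub_pos.2 hx.2), Complex.sub_re, Complex.ofReal_re,
    Complex.one_re, add_sub_cancel_right]

theorem rpow_neg_sub_one_le {a x : ℝ} (ha : a ≤ 1) (hx₀ : 0 < x) (hx₁ : x ≤ 1) :
    x ^ (-a) - 1 ≤ x ^ (-a) * (1 - x) := by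
  have hle : x ^ (-a) * x ≤ 1 := by
    rw [← Real.rpow_add_one hx₀.ne']
    exact Real.rpow_le_one hx₀.le hx₁ (by linarith)
  linarith

theorem one_sub_rpow_mul_rpow_neg_sub_one_nonneg {a b x : ℝ} (ha : 0 ≤ a)
    (hx₀ : 0 < x) (hx₁ : x ≤ 1) : 0 ≤ (1 - x) ^ b * (x ^ (-a) - 1) :=
  mul_nonneg (Real.rpow_nonneg (sub_nonneg.2 hx₁) b)
    (sub_nonneg.2 (Real.one_le_rpow_of_pos_of_le_one_of_nonpos hx₀ hx₁ (neg_nonpos.2 ha)))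

theorem one_sub_rpow_mul_rpow_neg_sub_one_le {a b x : ℝ} (ha : a ≤ 1)
    (hx₀ : 0 < x) (hx₁ : x < 1) :
    (1 - x) ^ b * (x ^ (-a) - 1) ≤ x ^ (-a) * (1 - x) ^ (b + 1) := by
  have hpos : 0 < 1 - x := sub_pos.2 hx₁
  calc (1 - x) ^ b * (x ^ (-a) - 1)
      ≤ (1 - x) ^ b * (x ^ (-a) * (1 - x)) := by
        gcongr
        exact rpow_neg_sub_one_le ha hx₀ hx₁.le
    _ = x ^ (-a) * (1 - x) ^ (b + 1) := by
        rw [Real.rpow_add_one hpos.ne']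
        ring

theorem integrableOn_one_sub_rpow_mul_rpow_neg_sub_one {a b : ℝ} (ha₀ : 0 ≤ a) (ha₁ : a < 1)
    (hb : -2 < b) :
    IntegrableOn (fun x : ℝ => (1 - x) ^ b * (x ^ (-a) - 1)) (Ioo 0 1) := by
  have hbeta : IntegrableOn (fun x : ℝ => x ^ (-a) * (1 - x) ^ (b + 1)) (Ioo 0 1) :=
    integrableOn_rpow_mul_one_sub_rpow (by linarith) (by linarith)
  refine hbeta.mono' (by fun_prop) ?_
  filter_upwards [ae_restrict_mem measurableSet_Ioo] with x hx
  rw [Real.norm_of_nonneg (one_sub_rpow_mul_rpow_neg_sub_one_nonneg ha₀ hx.1 hx.2.le)]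
  exact one_sub_rpow_mul_rpow_neg_sub_one_le ha₁.le hx.1 hx.2

theorem integrable_singular_kernel_general {α₁ α₂ : ℝ} (hα₁ : 0 < α₁) (hα₂ : 0 ≤ α₂)
    (hα₂' : α₂ < 1) :
    (∀ η ∈ Ioo (0 : ℝ) 1, 0 ≤ (1 - η) ^ (α₁ - 2) * (η ^ (-α₂) - 1)) ∧
    IntegrableOn (fun η : ℝ => (1 - η) ^ (α₁ - 2) * (η ^ (-α₂) - 1)) (Ioo 0 1) :=
  ⟨fun _ hη => one_sub_rpow_mul_rpow_neg_sub_one_nonneg hα₂ hη.1 hη.2.le,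
    integrableOn_one_sub_rpow_mul_rpow_neg_sub_one hα₂ hα₂' (by linarith)⟩

/-- For `0 < α₂ < α₁ < 1`, the function `η ↦ (1-η)^{α₁-2} (η^{-α₂} - 1)` is
nonnegative and Lebesgue integrable on `(0,1)`. -/
theorem integrable_singular_kernel (α₁ α₂ : ℝ) (h₂ : 0 < α₂) (h₂₁ : α₂ < α₁) (h₁ : α₁ < 1) :
    (∀ η ∈ Set.Ioo (0 : ℝ) 1, 0 ≤ (1 - η) ^ (α₁ - 2) * (η ^ (-α₂) - 1)) ∧
    IntegrableOn (fun η : ℝ => (1 - η) ^ (α₁ - 2) * (η ^ (-α₂) - 1)) (Set.Ioo 0 1) :=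
  integrable_singular_kernel_general (h₂.trans h₂₁) h₂.le (h₂₁.trans h₁)
end

section
/- Let E be a Banach space, T > 0, β ∈ (0,1], C ≥ 0, and let K : C([0,T];E) → C([0,T];E) be a map such that for all u, v ∈ C([0,T];E) and all t ∈ [0,T], ‖(Ku)(t) - (Kv)(t)‖ ≤ C ∫_0^t (t-τ)^{β-1} ‖u(τ) - v(τ)‖ dτ. Then for every n ≥ 1, every u, v ∈ C([0,T];E) and every t ∈ [0,T], ‖(Kⁿu)(t) - (Kⁿv)(t)‖ ≤ (C Γ(β))ⁿ t^{βn} / Γ(βn + 1) · sup_{s ∈ [0,T]} ‖u(s) - v(s)‖. -/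
open Set MeasureTheory

/-!
Let `I^β` be the Riemann–Liouville integral of order `β`. The hypothesis bounds the distance of
`K u` and `K v` at time `t` by `C Γ(β) I^β` of the distance of `u` and `v`. Starting from the
constant `dist u v`, induction on `n` then gives the claim, because `I^β` is monotone and, by the
Beta integral, sends `t ^ γ / Γ(γ + 1)` to `t ^ (γ + β) / Γ(γ + β + 1)`.
-/

/-- The Riemann–Liouville fractional integral of order `β` of `f`, based at `0` and evaluated at
`t`. It is `0` for `t ≤ 0`, where the domain of integration is empty. -/
noncomputable def riemannLiouvilleIntegral (β : ℝ) (f : ℝ → ℝ) (t : ℝ) : ℝ :=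
  (Real.Gamma β)⁻¹ * ∫ τ in Ioo 0 t, (t - τ) ^ (β - 1) * f τ

section RiemannLiouville

variable {β γ t : ℝ}

lemma integral_sub_rpow_mul_rpow (ht : 0 < t) (hβ : 0 < β) (hγ : -1 < γ) :
    ∫ τ in Ioo 0 t, (t - τ) ^ (β - 1) * τ ^ γ =
      Real.Gamma β * Real.Gamma (γ + 1) / Real.Gamma (γ + β + 1) * t ^ (γ + β) := by
  apply Complex.ofReal_injective
  calc ((∫ τ in Ioo 0 t, (t - τ) ^ (β - 1) * τ ^ γ : ℝ) : ℂ)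
    _ = ∫ τ in Ioo 0 t, (τ : ℂ) ^ ((γ + 1 : ℂ) - 1) * ((t : ℂ) - τ) ^ ((β : ℂ) - 1) := by
      rw [← integral_complex_ofReal]
      refine setIntegral_congr_fun measurableSet_Ioo fun τ hτ ↦ ?_
      simp only [Complex.ofReal_mul, Complex.ofReal_cpow hτ.1.le,
        Complex.ofReal_cpow (sub_nonneg.2 hτ.2.le), Complex.ofReal_sub, Complex.ofReal_one,
        add_sub_cancel_right, mul_comm]
    _ = (t : ℂ) ^ ((γ + 1 : ℂ) + β - 1) * Complex.betaIntegral (γ + 1) β := by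
      rw [← integral_Ioc_eq_integral_Ioo, ← intervalIntegral.integral_of_le ht.le,
        Complex.betaIntegral_scaled _ _ ht]
    _ = ((Real.Gamma β * Real.Gamma (γ + 1) / Real.Gamma (γ + β + 1) * t ^ (γ + β) : ℝ) : ℂ) := by
      rw [Complex.betaIntegral_eq_Gamma_mul_div _ _ (by simpa using neg_lt_iff_pos_add.1 hγ)
        (by simpa using hβ)]
      push_cast [Complex.ofReal_cpow ht.le, ← Complex.Gamma_ofReal]
      ring_nf

lemma integrableOn_sub_rpow_mul_rpow (hβ : 0 < β) (hγ : -1 < γ) :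
    IntegrableOn (fun τ ↦ (t - τ) ^ (β - 1) * τ ^ γ) (Ioo 0 t) := by
  rcases le_or_gt t 0 with ht | ht
  · simp only [Ioo_eq_empty ht.not_gt, integrableOn_empty]
  -- Only integrable functions have a nonzero Bochner integral.
  refine .of_integral_ne_zero ?_
  rw [integral_sub_rpow_mul_rpow ht hβ hγ]
  have := Real.Gamma_pos_of_pos hβ
  have := Real.Gamma_pos_of_pos (show 0 < γ + 1 by linarith)
  have := Real.Gamma_pos_of_pos (show 0 < γ + β + 1 by linarith)
  positivity

lemma riemannLiouvilleIntegral_const_mul (c : ℝ) (f : ℝ → ℝ) :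
    riemannLiouvilleIntegral β (fun τ ↦ c * f τ) t = c * riemannLiouvilleIntegral β f t := by
  simp only [riemannLiouvilleIntegral, mul_left_comm _ c, integral_const_mul]

lemma riemannLiouvilleIntegral_mono {f g : ℝ → ℝ} (hβ : 0 ≤ β) (hf : ∀ τ ∈ Ioo 0 t, 0 ≤ f τ)
    (hg : IntegrableOn (fun τ ↦ (t - τ) ^ (β - 1) * g τ) (Ioo 0 t))
    (hfg : ∀ τ ∈ Ioo 0 t, f τ ≤ g τ) :
    riemannLiouvilleIntegral β f t ≤ riemannLiouvilleIntegral β g t := by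
  have kernel_nonneg : ∀ τ ∈ Ioo 0 t, 0 ≤ (t - τ) ^ (β - 1) := fun τ hτ ↦
    Real.rpow_nonneg (sub_nonneg.2 hτ.2.le) _
  refine mul_le_mul_of_nonneg_left (integral_mono_of_nonneg ?_ hg ?_)
    (inv_nonneg.2 (Real.Gamma_nonneg_of_nonneg hβ))
  · exact ae_restrict_of_forall_mem measurableSet_Ioo fun τ hτ ↦
      mul_nonneg (kernel_nonneg τ hτ) (hf τ hτ)
  · exact ae_restrict_of_forall_mem measurableSet_Ioo fun τ hτ ↦
      mul_le_mul_of_nonneg_left (hfg τ hτ) (kernel_nonneg τ hτ)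

lemma riemannLiouvilleIntegral_rpow (ht : 0 < t) (hβ : 0 < β) (hγ : -1 < γ) :
    riemannLiouvilleIntegral β (fun τ ↦ τ ^ γ) t =
      Real.Gamma (γ + 1) / Real.Gamma (γ + β + 1) * t ^ (γ + β) := by
  have := (Real.Gamma_pos_of_pos hβ).ne'
  rw [riemannLiouvilleIntegral, integral_sub_rpow_mul_rpow ht hβ hγ]
  field_simp

lemma riemannLiouvilleIntegral_le_of_le_rpow {f : ℝ → ℝ} {M : ℝ} (ht : 0 < t) (hβ : 0 < β)
    (hγ : -1 < γ) (hf : ∀ τ ∈ Ioo 0 t, 0 ≤ f τ)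
    (hfM : ∀ τ ∈ Ioo 0 t, f τ ≤ M / Real.Gamma (γ + 1) * τ ^ γ) :
    riemannLiouvilleIntegral β f t ≤ M / Real.Gamma (γ + β + 1) * t ^ (γ + β) := by
  have := (Real.Gamma_pos_of_pos (show 0 < γ + 1 by linarith)).ne'
  calc riemannLiouvilleIntegral β f t
    _ ≤ riemannLiouvilleIntegral β (fun τ ↦ M / Real.Gamma (γ + 1) * τ ^ γ) t := by
      refine riemannLiouvilleIntegral_mono hβ.le hf ?_ hfM
      simpa only [IntegrableOn, mul_left_comm] using
        (integrableOn_sub_rpow_mul_rpow hβ hγ).const_mul (M / Real.Gamma (γ + 1))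
    _ = M / Real.Gamma (γ + β + 1) * t ^ (γ + β) := by
      rw [riemannLiouvilleIntegral_const_mul, riemannLiouvilleIntegral_rpow ht hβ hγ]
      field_simp

lemma le_of_forall_succ_le_riemannLiouvilleIntegral {T A M : ℝ} {f : ℕ → ℝ → ℝ} (hβ : 0 < β)
    (hA : 0 ≤ A) (hf : ∀ n, ∀ t ∈ Icc 0 T, 0 ≤ f n t) (hzero : ∀ t ∈ Icc 0 T, f 0 t ≤ M)
    (hsucc : ∀ n, ∀ t ∈ Icc 0 T, f (n + 1) t ≤ A * riemannLiouvilleIntegral β (f n) t)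
    (n : ℕ) (ht : t ∈ Icc 0 T) :
    f n t ≤ A ^ n * t ^ (β * n) / Real.Gamma (β * n + 1) * M := by
  have hM : 0 ≤ M := (hf 0 t ht).trans (hzero t ht)
  induction n generalizing t with
  | zero => simpa using hzero t ht
  | succ n ih =>
    have hexp : β * (n + 1 : ℕ) = β * n + β := by push_cast; ring
    refine (hsucc n t ht).trans ?_
    rcases ht.1.eq_or_lt with rfl | htpos
    · have := Real.Gamma_pos_of_pos (show 0 < β * (n + 1 : ℕ) + 1 by positivity)
      simp only [riemannLiouvilleIntegral, Ioo_self, setIntegral_empty, mul_zero]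
      positivity
    have hmem : ∀ τ ∈ Ioo 0 t, τ ∈ Icc 0 T := fun τ hτ ↦ ⟨hτ.1.le, hτ.2.le.trans ht.2⟩
    have hγ : -1 < β * n := neg_one_lt_zero.trans_le (by positivity)
    calc A * riemannLiouvilleIntegral β (f n) t
      _ ≤ A * (A ^ n * M / Real.Gamma (β * n + β + 1) * t ^ (β * n + β)) := by
        gcongr
        refine riemannLiouvilleIntegral_le_of_le_rpow htpos hβ hγ
          (fun τ hτ ↦ hf n τ (hmem τ hτ)) fun τ hτ ↦ (ih (hmem τ hτ)).trans_eq ?_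
        ring
      _ = A ^ (n + 1) * t ^ (β * (n + 1 : ℕ)) / Real.Gamma (β * (n + 1 : ℕ) + 1) * M := by
        rw [hexp]
        ring

end RiemannLiouville

theorem iterate_singular_contraction_estimate_general {E : Type*} [PseudoMetricSpace E]
    {T β C : ℝ} (hT : 0 ≤ T) (hβ : 0 < β) (hC : 0 ≤ C) (K : C(Icc 0 T, E) → C(Icc 0 T, E))
    (hK : ∀ u v : C(Icc 0 T, E), ∀ t : Icc 0 T,
      dist (K u t) (K v t) ≤ C * ∫ τ in Ioo 0 (t : ℝ), ((t : ℝ) - τ) ^ (β - 1) *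
        dist (IccExtend hT u τ) (IccExtend hT v τ))
    (n : ℕ) (u v : C(Icc 0 T, E)) (t : Icc 0 T) :
    dist (K^[n] u t) (K^[n] v t) ≤
      (C * Real.Gamma β) ^ n * (t : ℝ) ^ (β * n) / Real.Gamma (β * n + 1) * dist u v := by
  have hΓ : 0 < Real.Gamma β := Real.Gamma_pos_of_pos hβ
  let f (n : ℕ) (τ : ℝ) : ℝ := dist (IccExtend hT (K^[n] u) τ) (IccExtend hT (K^[n] v) τ)
  have hsucc (n : ℕ) (t : ℝ) (ht : t ∈ Icc 0 T) :
      f (n + 1) t ≤ C * Real.Gamma β * riemannLiouvilleIntegral β (f n) t := by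
    simpa only [f, riemannLiouvilleIntegral, mul_assoc, mul_inv_cancel_left₀ hΓ.ne',
      Function.iterate_succ_apply', IccExtend_of_mem hT _ ht] using hK (K^[n] u) (K^[n] v) ⟨t, ht⟩
  have hzero (t : ℝ) : f 0 t ≤ dist u v := ContinuousMap.dist_apply_le_dist (projIcc 0 T hT t)
  have hnonneg (n : ℕ) (t : ℝ) : 0 ≤ f n t := dist_nonneg
  simpa only [f, IccExtend_val] using le_of_forall_succ_le_riemannLiouvilleIntegral hβ
    (mul_nonneg hC hΓ.le) (fun n t _ ↦ hnonneg n t) (fun t _ ↦ hzero t) hsucc n t.2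

/-- Iterates of a map `K` on `C([0,T];E)` satisfying a weakly singular Gronwall-type
contraction estimate satisfy
`‖(Kⁿu)(t) - (Kⁿv)(t)‖ ≤ (C Γ(β))ⁿ t^{βn} / Γ(βn+1) · ‖u - v‖_∞`. -/
theorem iterate_singular_contraction_estimate
    (E : Type*) [NormedAddCommGroup E] [NormedSpace ℝ E] [CompleteSpace E]
    (T : ℝ) (hT : 0 < T) (β : ℝ) (hβ : β ∈ Set.Ioc (0 : ℝ) 1) (C : ℝ) (hC : 0 ≤ C)
    (K : C(Set.Icc (0 : ℝ) T, E) → C(Set.Icc (0 : ℝ) T, E))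
    (hK : ∀ u v : C(Set.Icc (0 : ℝ) T, E), ∀ t : Set.Icc (0 : ℝ) T,
      ‖K u t - K v t‖ ≤ C * ∫ τ in Set.Ioo (0 : ℝ) (t : ℝ), ((t : ℝ) - τ) ^ (β - 1) *
        ‖Set.IccExtend hT.le u τ - Set.IccExtend hT.le v τ‖) :
    ∀ n : ℕ, 1 ≤ n → ∀ u v : C(Set.Icc (0 : ℝ) T, E), ∀ t : Set.Icc (0 : ℝ) T,
      ‖(K^[n]) u t - (K^[n]) v t‖ ≤
        (C * Real.Gamma β) ^ n * (t : ℝ) ^ (β * n) / Real.Gamma (β * n + 1) * ‖u - v‖ := by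
  intro n _ u v t
  simpa only [dist_eq_norm] using iterate_singular_contraction_estimate_general hT.le hβ.1 hC K
    (by simpa only [dist_eq_norm] using hK) n u v t
end

section
/- Let E be a Banach space, T > 0, β ∈ (0,1], C ≥ 0, and let K : C([0,T];E) → C([0,T];E) be a map such that for all u, v ∈ C([0,T];E) and all t ∈ [0,T], ‖(Ku)(t) - (Kv)(t)‖ ≤ C ∫_0^t (t-τ)^{β-1} ‖u(τ) - v(τ)‖ dτ. Then K has a unique fixed point in C([0,T];E); that is, there exists exactly one u ∈ C([0,T];E) with Ku = u. -/
/-!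
Let `k` be an integrable kernel on `(0,T)`, for instance `k s = C * s ^ (β - 1)` with `β > 0`, and
measure distances in `C([0,T];E)` with the exponential weight `exp (r * t)` of Bielecki. If
`dist (u τ) (v τ) ≤ M * exp (r * τ)` on `[0,T]`, then
`∫₀ᵗ |k (t - τ)| * dist (u τ) (v τ) dτ ≤ M * exp (r * t) * ∫₀ᵀ exp (-(r * s)) * |k s| ds`,
and the last integral tends to `0` as `r → ∞`. So for large `r` the map `K` is a contraction for the
weighted distance, which is equivalent to the supremum distance; some iterate of `K` is then a
contraction for the latter, and the Banach fixed point theorem applies.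
-/

open Set MeasureTheory
open Filter Topology
open scoped NNReal

section Laplace

variable {F : Type*} [NormedAddCommGroup F] [NormedSpace ℝ F] {f : ℝ → F} {s : Set ℝ}

lemma norm_exp_neg_mul_smul_le {r x : ℝ} (hr : 0 ≤ r) (hx : 0 ≤ x) (y : F) :
    ‖Real.exp (-(r * x)) • y‖ ≤ ‖y‖ := by
  rw [norm_smul, Real.norm_of_nonneg (Real.exp_nonneg _)]
  exact mul_le_of_le_one_left (norm_nonneg y) (Real.exp_le_one_iff.2 (by nlinarith))

lemma aestronglyMeasurable_exp_neg_mul_smul {μ : Measure ℝ} (hf : AEStronglyMeasurable f μ)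
    (r : ℝ) : AEStronglyMeasurable (fun x ↦ Real.exp (-(r * x)) • f x) μ :=
  (by fun_prop : Continuous fun x : ℝ ↦ Real.exp (-(r * x))).aestronglyMeasurable.smul hf

lemma integrableOn_exp_neg_mul_smul (hs : MeasurableSet s) (hs0 : s ⊆ Ici 0)
    (hf : IntegrableOn f s) {r : ℝ} (hr : 0 ≤ r) :
    IntegrableOn (fun x ↦ Real.exp (-(r * x)) • f x) s := by
  refine Integrable.mono hf (aestronglyMeasurable_exp_neg_mul_smul hf.aestronglyMeasurable r) ?_
  filter_upwards [ae_restrict_mem hs] with x hx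
  exact norm_exp_neg_mul_smul_le hr (hs0 hx) (f x)

lemma tendsto_setIntegral_exp_neg_mul_smul_atTop (hs : MeasurableSet s) (hs0 : s ⊆ Ioi 0)
    (hf : IntegrableOn f s) :
    Tendsto (fun r : ℝ ↦ ∫ x in s, Real.exp (-(r * x)) • f x) atTop (𝓝 0) := by
  rw [← integral_zero ℝ F (μ := volume.restrict s)]
  refine tendsto_integral_filter_of_dominated_convergence (fun x ↦ ‖f x‖)
    (.of_forall (aestronglyMeasurable_exp_neg_mul_smul hf.aestronglyMeasurable)) ?_ hf.norm ?_
  · filter_upwards [eventually_ge_atTop 0] with r hr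
    filter_upwards [ae_restrict_mem hs] with x hx
    exact norm_exp_neg_mul_smul_le hr (hs0 hx).le (f x)
  · filter_upwards [ae_restrict_mem hs] with x hx
    have hexp : Tendsto (fun r : ℝ ↦ Real.exp (-(r * x))) atTop (𝓝 0) :=
      Real.tendsto_exp_neg_atTop_nhds_zero.comp (tendsto_id.atTop_mul_const (hs0 hx))
    simpa only [zero_smul] using hexp.smul_const (f x)

end Laplace

section Volterra

lemma integrableOn_Ioo_comp_sub_left {F : Type*} [NormedAddCommGroup F] {f : ℝ → F} {t : ℝ}
    (hf : IntegrableOn f (Ioo 0 t)) : IntegrableOn (fun τ ↦ f (t - τ)) (Ioo 0 t) := by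
  simpa [Function.comp_def] using
    ((volume.measurePreserving_sub_left t).integrableOn_comp_preimage
      (MeasurableEquiv.subLeft t).measurableEmbedding).2 hf

lemma setIntegral_Ioo_comp_sub_left {F : Type*} [NormedAddCommGroup F] [NormedSpace ℝ F]
    (f : ℝ → F) (t : ℝ) : ∫ τ in Ioo 0 t, f (t - τ) = ∫ τ in Ioo 0 t, f τ := by
  simpa using (volume.measurePreserving_sub_left t).setIntegral_preimage_emb
    (MeasurableEquiv.subLeft t).measurableEmbedding f (Ioo 0 t)

lemma setIntegral_comp_sub_mul_le_mul_exp {k d : ℝ → ℝ} {r t T M : ℝ} (hr : 0 ≤ r) (htT : t ≤ T)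
    (hk : IntegrableOn k (Ioo 0 T)) (hM : 0 ≤ M)
    (hd : ∀ τ ∈ Ioo 0 t, |d τ| ≤ M * Real.exp (r * τ)) :
    ∫ τ in Ioo 0 t, k (t - τ) * d τ ≤
      (∫ x in Ioo 0 T, Real.exp (-(r * x)) * |k x|) * M * Real.exp (r * t) := by
  set g : ℝ → ℝ := fun x ↦ Real.exp (-(r * x)) * |k x|
  have hg : IntegrableOn g (Ioo 0 T) :=
    integrableOn_exp_neg_mul_smul measurableSet_Ioo (fun _ hx ↦ hx.1.le) hk.abs hr
  have hsub : Ioo 0 t ⊆ Ioo 0 T := Ioo_subset_Ioo_right htT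
  have hpointwise : ∀ τ ∈ Ioo 0 t,
      ‖k (t - τ) * d τ‖ ≤ M * Real.exp (r * t) * g (t - τ) := fun τ hτ ↦ by
    have hexp : Real.exp (r * τ) = Real.exp (r * t) * Real.exp (-(r * (t - τ))) := by
      rw [← Real.exp_add]
      ring_nf
    calc ‖k (t - τ) * d τ‖
        = |k (t - τ)| * |d τ| := by rw [Real.norm_eq_abs, abs_mul]
      _ ≤ |k (t - τ)| * (M * Real.exp (r * τ)) := by gcongr; exact hd τ hτ
      _ = M * Real.exp (r * t) * g (t - τ) := by rw [hexp]; ring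
  calc ∫ τ in Ioo 0 t, k (t - τ) * d τ
      ≤ ∫ τ in Ioo 0 t, M * Real.exp (r * t) * g (t - τ) :=
        (Real.le_norm_self _).trans <| norm_integral_le_of_norm_le
          ((integrableOn_Ioo_comp_sub_left (hg.mono_set hsub)).const_mul _)
          ((ae_restrict_iff' measurableSet_Ioo).2 (.of_forall hpointwise))
    _ = M * Real.exp (r * t) * ∫ x in Ioo 0 t, g x := by
        rw [integral_const_mul, setIntegral_Ioo_comp_sub_left]
    _ ≤ M * Real.exp (r * t) * ∫ x in Ioo 0 T, g x := by
        gcongr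
        exact .of_forall fun x ↦ mul_nonneg (Real.exp_nonneg _) (abs_nonneg (k x))
    _ = (∫ x in Ioo 0 T, g x) * M * Real.exp (r * t) := by ring

end Volterra

lemma existsUnique_fixedPoint_of_lipschitzWith_iterate {X : Type*} [MetricSpace X]
    [CompleteSpace X] [Nonempty X] {f : X → X} {A q : ℝ≥0} (hq : q < 1)
    (hf : ∀ n, LipschitzWith (A * q ^ n) f^[n]) : ∃! x, f x = x := by
  have hlim : Tendsto (fun n : ℕ ↦ A * q ^ n) atTop (𝓝 0) := by
    simpa using (NNReal.tendsto_pow_atTop_nhds_zero_of_lt_one hq).const_mul A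
  obtain ⟨n, hn⟩ := (hlim.eventually_lt_const one_pos).exists
  have hcontr : ContractingWith (A * q ^ n) f^[n] := ⟨hn, hf n⟩
  exact ⟨hcontr.fixedPoint, hcontr.isFixedPt_fixedPoint_iterate,
    fun x hx ↦ hcontr.fixedPoint_unique (Function.IsFixedPt.iterate hx n)⟩

/-- `K` contracts, with ratio `q`, the Bielecki distance `⨆ x, dist (u x) (v x) / w x` of weight
`w`. The definition quantifies over the bounds `M` of that distance, so that no supremum, which
could be infinite, has to be taken. -/
def IsBieleckiContraction {X E : Type*} [TopologicalSpace X] [PseudoMetricSpace E]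
    (w : X → ℝ) (q : ℝ≥0) (K : C(X, E) → C(X, E)) : Prop :=
  ∀ ⦃M : ℝ⦄, 0 ≤ M → ∀ ⦃u v : C(X, E)⦄, (∀ x, dist (u x) (v x) ≤ M * w x) →
    ∀ x, dist (K u x) (K v x) ≤ q * M * w x

namespace IsBieleckiContraction

variable {X E : Type*} [TopologicalSpace X] {w : X → ℝ} {q c W : ℝ≥0}

lemma iterate [PseudoMetricSpace E] {K : C(X, E) → C(X, E)}
    (hK : IsBieleckiContraction w q K) (n : ℕ) :
    IsBieleckiContraction w (q ^ n) K^[n] := by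
  intro M hM u v huv
  induction n with
  | zero => simpa using huv
  | succ n ih =>
    simpa only [Function.iterate_succ_apply', pow_succ', NNReal.coe_mul, mul_assoc] using
      hK (by positivity) ih

lemma lipschitzWith [CompactSpace X] [PseudoMetricSpace E] {K : C(X, E) → C(X, E)}
    (hK : IsBieleckiContraction w q K) (hc : 0 < c) (hcw : ∀ x, c ≤ w x) (hwW : ∀ x, w x ≤ W) :
    LipschitzWith (W / c * q) K := by
  refine LipschitzWith.of_dist_le_mul fun u v ↦
    (ContinuousMap.dist_le (by positivity)).2 fun x ↦ ?_
  have huv : ∀ y, dist (u y) (v y) ≤ dist u v / c * w y := fun y ↦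
    calc dist (u y) (v y) ≤ dist u v := ContinuousMap.dist_apply_le_dist y
      _ = dist u v / c * c := by field_simp
      _ ≤ dist u v / c * w y := by gcongr; exact hcw y
  calc dist (K u x) (K v x)
      ≤ q * (dist u v / c) * w x := hK (by positivity) huv x
    _ ≤ q * (dist u v / c) * W := by gcongr; exact hwW x
    _ = ↑(W / c * q) * dist u v := by push_cast; ring

lemma existsUnique_fixedPoint [CompactSpace X] [MetricSpace E] [CompleteSpace E] [Nonempty E]
    {K : C(X, E) → C(X, E)} (hK : IsBieleckiContraction w q K) (hq : q < 1) (hc : 0 < c)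
    (hcw : ∀ x, c ≤ w x) (hwW : ∀ x, w x ≤ W) : ∃! u, K u = u :=
  have : Nonempty C(X, E) := .map (ContinuousMap.const X) ‹_›
  existsUnique_fixedPoint_of_lipschitzWith_iterate hq fun n ↦
    (hK.iterate n).lipschitzWith hc hcw hwW

end IsBieleckiContraction

lemma integrableOn_Ioo_rpow_sub_one {β : ℝ} (hβ : 0 < β) {T : ℝ} (hT : 0 < T) :
    IntegrableOn (fun x : ℝ ↦ x ^ (β - 1)) (Ioo 0 T) :=
  (intervalIntegral.integrableOn_Ioo_rpow_iff hT).2 (by linarith)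

theorem exists_unique_fixedPoint_of_singular_contraction_general
    {E : Type*} [MetricSpace E] [CompleteSpace E] [Nonempty E] {T : ℝ} (hT : 0 ≤ T)
    {k : ℝ → ℝ} (hk : IntegrableOn k (Ioo 0 T)) (K : C(Icc 0 T, E) → C(Icc 0 T, E))
    (hK : ∀ (u v : C(Icc 0 T, E)) (t : Icc 0 T), dist (K u t) (K v t) ≤
      ∫ τ in Ioo 0 (t : ℝ), k (t - τ) * dist (IccExtend hT u τ) (IccExtend hT v τ)) :
    ∃! u, K u = u := by
  have hlim : Tendsto (fun r : ℝ ↦ ∫ x in Ioo 0 T, Real.exp (-(r * x)) * |k x|) atTop (𝓝 0) :=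
    tendsto_setIntegral_exp_neg_mul_smul_atTop measurableSet_Ioo Ioo_subset_Ioi_self hk.abs
  obtain ⟨r, hq, hr⟩ := ((hlim.eventually_lt_const one_pos).and (eventually_ge_atTop 0)).exists
  lift ∫ x in Ioo 0 T, Real.exp (-(r * x)) * |k x| to ℝ≥0
    using integral_nonneg fun x ↦ by positivity with q hq_eq
  have hcontr : IsBieleckiContraction (fun t : Icc 0 T ↦ Real.exp (r * t)) q K := by
    intro M hM u v huv t
    rw [hq_eq]
    refine (hK u v t).trans (setIntegral_comp_sub_mul_le_mul_exp hr t.2.2 hk hM fun τ hτ ↦ ?_)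
    have hτT : τ ∈ Icc 0 T := ⟨hτ.1.le, hτ.2.le.trans t.2.2⟩
    simpa only [abs_dist, IccExtend_of_mem hT _ hτT] using huv ⟨τ, hτT⟩
  refine hcontr.existsUnique_fixedPoint (c := 1) (W := (Real.exp (r * T)).toNNReal)
    (mod_cast hq) one_pos (fun t ↦ ?_) (fun t ↦ ?_)
  · simpa using mul_nonneg hr t.2.1
  · rw [Real.coe_toNNReal _ (Real.exp_nonneg _)]
    gcongr
    exact t.2.2

/-- A map `K` on `C([0,T];E)` satisfying a weakly singular Gronwall-type
contraction estimate has a unique fixed point. -/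
theorem exists_unique_fixedPoint_of_singular_contraction
    (E : Type*) [NormedAddCommGroup E] [NormedSpace ℝ E] [CompleteSpace E]
    (T : ℝ) (hT : 0 < T) (β : ℝ) (hβ : β ∈ Set.Ioc (0 : ℝ) 1) (C : ℝ) (hC : 0 ≤ C)
    (K : C(Set.Icc (0 : ℝ) T, E) → C(Set.Icc (0 : ℝ) T, E))
    (hK : ∀ u v : C(Set.Icc (0 : ℝ) T, E), ∀ t : Set.Icc (0 : ℝ) T,
      ‖K u t - K v t‖ ≤ C * ∫ τ in Set.Ioo (0 : ℝ) (t : ℝ), ((t : ℝ) - τ) ^ (β - 1) *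
        ‖Set.IccExtend hT.le u τ - Set.IccExtend hT.le v τ‖) :
    ∃! u : C(Set.Icc (0 : ℝ) T, E), K u = u :=
  exists_unique_fixedPoint_of_singular_contraction_general hT.le
    ((integrableOn_Ioo_rpow_sub_one hβ.1 hT).const_mul C) K
    (by simpa only [dist_eq_norm, mul_assoc, integral_const_mul] using hK)
end

section
/- Let X be a complex Banach space, let (μ_k)_{k ∈ ℕ} be a strictly increasing sequence of positive real numbers tending to ∞, and let (v_k)_{k ∈ ℕ} be a sequence in X. Let D = ℂ \ {-μ_k : k ∈ ℕ}, and assume that the series J(η) = Σ_{k=0}^∞ v_k / (η + μ_k) converges in X for every η ∈ D, uniformly on every compact subset of D. If J(η) = 0 for every η in some nonempty open subset of D, then v_k = 0 for every k ∈ ℕ. -/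
open Filter

/-!
Testing against continuous linear functionals reduces the claim to series with values in the Banach
space `ℂ`. Poles that tend to infinity form a closed countable set, whose complement is open and
connected, so the sum, a locally uniform limit of holomorphic functions, vanishes on that whole
complement by the identity theorem. On a small circle around the pole `a i` every partial sum that
contains the `i`-th term has integral `2πi • v i`; by uniform convergence on the circle these
integrals tend to the integral of the sum, which is zero.
-/

open Bornology Metric Set Topology

section Poles

variable {ι E : Type*} {a : ι → E}

section PseudoMetric

variable [PseudoMetricSpace E]

lemma countable_of_tendsto_cobounded (ha : Tendsto a cofinite (cobounded E)) :
    Countable ι := by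
  obtain _ | ⟨⟨i⟩⟩ := isEmpty_or_nonempty ι
  · infer_instance
  have hker : (cobounded E).ker = ∅ :=
    eq_empty_of_forall_notMem fun y hy =>
      mem_ker.1 hy _ (isBounded_def.1 isBounded_singleton) (mem_singleton y)
  have : (cobounded E).IsCountablyGenerated := by
    rw [← comap_dist_right_atTop (a i)]
    infer_instance
  simpa [hker, countable_univ_iff] using ha.countable_compl_preimage_ker

lemma sphere_subset_compl_range {i : ι} {r : ℝ} (hr : 0 < r)
    (hball : ∀ k ≠ i, a k ∉ closedBall (a i) r) : sphere (a i) r ⊆ (range a)ᶜ := by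
  rintro _ hz ⟨k, rfl⟩
  obtain rfl | hk := eq_or_ne k i
  · exact hr.ne' (by simpa using hz.symm)
  · exact hball k hk (sphere_subset_closedBall hz)

end PseudoMetric

variable [MetricSpace E] [ProperSpace E]

lemma isClosed_image_of_tendsto_cobounded
    (ha : Tendsto a cofinite (cobounded E)) (S : Set ι) : IsClosed (a '' S) := by
  let _ : TopologicalSpace ι := ⊥
  have : DiscreteTopology ι := ⟨rfl⟩
  have ha_proper : IsProperMap a := isProperMap_iff_tendsto_cocompact.2
    ⟨continuous_of_discreteTopology, by rwa [cocompact_eq_cofinite, ← cobounded_eq_cocompact]⟩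
  exact ha_proper.isClosedMap S (isClosed_discrete S)

lemma isOpen_compl_range_of_tendsto_cobounded
    (ha : Tendsto a cofinite (cobounded E)) : IsOpen (range a)ᶜ := by
  rw [← image_univ]
  exact (isClosed_image_of_tendsto_cobounded ha univ).isOpen_compl

lemma exists_closedBall_forall_notMem_of_tendsto_cobounded
    (ha : Tendsto a cofinite (cobounded E)) (ha_inj : Function.Injective a) (i : ι) :
    ∃ r > 0, ∀ k ≠ i, a k ∉ closedBall (a i) r := by
  have hi : (a '' {i}ᶜ)ᶜ ∈ 𝓝 (a i) :=
    (isClosed_image_of_tendsto_cobounded ha _).compl_mem_nhds fun ⟨_, hk, h⟩ => hk (ha_inj h)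
  obtain ⟨r, hr, hball⟩ := nhds_basis_closedBall.mem_iff.1 hi
  exact ⟨r, hr, fun k hk hmem => hball hmem ⟨k, hk, rfl⟩⟩

end Poles

lemma circleIntegral_inv_sub_of_notMem_closedBall {c w : ℂ} {r : ℝ} (hr : 0 ≤ r)
    (hw : w ∉ closedBall c r) : (∮ z in C(c, r), (z - w)⁻¹) = 0 := by
  have hd : DifferentiableOn ℂ (fun z : ℂ => (z - w)⁻¹) (closedBall c r) :=
    (differentiableOn_id.sub_const w).inv fun z hz hzw => hw (sub_eq_zero.1 hzw ▸ hz)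
  exact (hd.diffContOnCl_ball subset_rfl).circleIntegral_eq_zero hr

/-- The finite sum of simple fractions `∑ k ∈ s, v k / (z - a k)` with poles `a` and
vector-valued residues `v`, as a function of `z`. -/
noncomputable def partialFractionSum {ι X : Type*} [AddCommGroup X] [Module ℂ X]
    (a : ι → ℂ) (v : ι → X) (s : Finset ι) (z : ℂ) : X :=
  ∑ k ∈ s, (z - a k)⁻¹ • v k

namespace partialFractionSum

variable {ι α X : Type*} {a : ι → ℂ}

lemma neg_poles [AddCommGroup X] [Module ℂ X] (b : ι → ℂ) (v : ι → X) (s : Finset ι) :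
    partialFractionSum (-b) v s = fun z => ∑ k ∈ s, (z + b k)⁻¹ • v k := by
  ext z
  simp only [partialFractionSum, Pi.neg_apply, sub_neg_eq_add]

lemma strongDual_comp [AddCommGroup X] [Module ℂ X] [TopologicalSpace X] (φ : StrongDual ℂ X)
    (v : ι → X) (s : Finset ι) :
    φ ∘ partialFractionSum a v s = partialFractionSum a (φ ∘ v) s := by
  ext z
  simp only [partialFractionSum, Function.comp_apply, map_sum, map_smul]

variable [NormedAddCommGroup X] [NormedSpace ℂ X]

lemma differentiableOn (v : ι → X) (s : Finset ι) :
    DifferentiableOn ℂ (partialFractionSum a v s) (range a)ᶜ :=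
  .fun_sum fun k _ => by
    have hne : ∀ z ∈ (range a)ᶜ, z - a k ≠ 0 := fun z hz hzk => hz ⟨k, (sub_eq_zero.1 hzk).symm⟩
    exact ((differentiableOn_id.sub_const (a k)).inv hne).smul_const (v k)

variable [CompleteSpace X] {i : ι} {r : ℝ} {v : ι → X} {l : Filter α} {s : α → Finset ι}
  {J : ℂ → X}

lemma circleIntegral_eq (hr : 0 < r) (hball : ∀ k ≠ i, a k ∉ closedBall (a i) r)
    (v : ι → X) {s : Finset ι} (hi : i ∈ s) :
    (∮ z in C(a i, r), partialFractionSum a v s z) = (2 * Real.pi * Complex.I : ℂ) • v i := by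
  have hint : ∀ k ∈ s, CircleIntegrable (fun z => (z - a k)⁻¹ • v k) (a i) r := fun k _ => by
    have hk : CircleIntegrable (fun z => (z - a k)⁻¹) (a i) r :=
      circleIntegrable_sub_inv_iff.2 <| .inr fun hz =>
        sphere_subset_compl_range hr hball (abs_of_pos hr ▸ hz) ⟨k, rfl⟩
    exact hk.smul_continuousOn continuousOn_const
  calc (∮ z in C(a i, r), partialFractionSum a v s z)
      = ∑ k ∈ s, (∮ z in C(a i, r), (z - a k)⁻¹) • v k := by
        simp only [partialFractionSum, circleIntegral.integral_fun_sum hint,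
          circleIntegral.integral_smul_const]
    _ = (∮ z in C(a i, r), (z - a i)⁻¹) • v i :=
        Finset.sum_eq_single_of_mem i hi fun k _ hk => by
          rw [circleIntegral_inv_sub_of_notMem_closedBall hr.le (hball k hk), zero_smul]
    _ = (2 * Real.pi * Complex.I : ℂ) • v i := by
        rw [circleIntegral.integral_sub_center_inv _ hr.ne']

lemma circleIntegral_limit_eq [l.NeBot] [l.IsCountablyGenerated] (hr : 0 < r)
    (hball : ∀ k ≠ i, a k ∉ closedBall (a i) r) (hs : ∀ᶠ n in l, i ∈ s n)
    (hJ : TendstoUniformlyOn (fun n => partialFractionSum a v (s n)) J l (sphere (a i) r)) :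
    (∮ z in C(a i, r), J z) = (2 * Real.pi * Complex.I : ℂ) • v i := by
  have hlim := hJ.tendsto_circleIntegral_of_continuousOn hr.le (.of_forall fun n =>
    (differentiableOn v (s n)).continuousOn.mono (sphere_subset_compl_range hr hball))
  refine tendsto_nhds_unique hlim (tendsto_const_nhds.congr' ?_)
  filter_upwards [hs] with n hn using (circleIntegral_eq hr hball v hn).symm

lemma limit_eqOn_zero [l.NeBot] (ha : Tendsto a cofinite (cobounded ℂ))
    (hJ : TendstoLocallyUniformlyOn (fun n => partialFractionSum a v (s n)) J l (range a)ᶜ)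
    {z₀ : ℂ} (hz₀ : z₀ ∉ range a) (hzero : ∃ᶠ z in 𝓝[≠] z₀, J z = 0) :
    EqOn J 0 (range a)ᶜ := by
  have hopen : IsOpen (range a)ᶜ := isOpen_compl_range_of_tendsto_cobounded ha
  have hconn : IsPreconnected (range a)ᶜ := by
    have := countable_of_tendsto_cobounded ha
    exact ((countable_range a).isConnected_compl_of_one_lt_rank
      (by simp [Complex.rank_real_complex])).isPreconnected
  have hdiff : DifferentiableOn ℂ J (range a)ᶜ :=
    hJ.differentiableOn (.of_forall fun n => differentiableOn v (s n)) hopen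
  exact (hdiff.analyticOnNhd hopen).eqOn_zero_of_preconnected_of_frequently_eq_zero hconn hz₀ hzero

lemma coeff_eq_zero_of_completeSpace [l.NeBot] [l.IsCountablyGenerated]
    (ha : Tendsto a cofinite (cobounded ℂ)) (ha_inj : Function.Injective a)
    (hs : ∀ k, ∀ᶠ n in l, k ∈ s n)
    (hJ : TendstoLocallyUniformlyOn (fun n => partialFractionSum a v (s n)) J l (range a)ᶜ)
    {z₀ : ℂ} (hz₀ : z₀ ∉ range a) (hzero : ∃ᶠ z in 𝓝[≠] z₀, J z = 0) (i : ι) :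
    v i = 0 := by
  obtain ⟨r, hr, hball⟩ := exists_closedBall_forall_notMem_of_tendsto_cobounded ha ha_inj i
  have hsphere := sphere_subset_compl_range hr hball
  have hJsphere : TendstoUniformlyOn (fun n => partialFractionSum a v (s n)) J l (sphere (a i) r) :=
    (tendstoLocallyUniformlyOn_iff_tendstoUniformlyOn_of_compact (isCompact_sphere _ _)).1
      (hJ.mono hsphere)
  have hres : (2 * Real.pi * Complex.I : ℂ) • v i = 0 :=
    calc (2 * Real.pi * Complex.I : ℂ) • v i
        = ∮ z in C(a i, r), J z := (circleIntegral_limit_eq hr hball (hs i) hJsphere).symm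
      _ = ∮ z in C(a i, r), (0 : ℂ → X) z :=
          circleIntegral.integral_congr hr.le ((limit_eqOn_zero ha hJ hz₀ hzero).mono hsphere)
      _ = 0 := by simp [circleIntegral]
  exact (smul_eq_zero.1 hres).resolve_left Complex.two_pi_I_ne_zero

lemma coeff_eq_zero {X : Type*} [AddCommGroup X] [Module ℂ X] [UniformSpace X]
    [IsUniformAddGroup X] [SeparatingDual ℂ X] {v : ι → X} {J : ℂ → X} [l.NeBot]
    [l.IsCountablyGenerated] (ha : Tendsto a cofinite (cobounded ℂ)) (ha_inj : Function.Injective a)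
    (hs : ∀ k, ∀ᶠ n in l, k ∈ s n)
    (hJ : TendstoLocallyUniformlyOn (fun n => partialFractionSum a v (s n)) J l (range a)ᶜ)
    {z₀ : ℂ} (hz₀ : z₀ ∉ range a) (hzero : ∃ᶠ z in 𝓝[≠] z₀, J z = 0) (i : ι) :
    v i = 0 := by
  refine SeparatingDual.eq_zero_of_forall_dual_eq_zero (R := ℂ) fun φ => ?_
  have hφJ : TendstoLocallyUniformlyOn (fun n => partialFractionSum a (φ ∘ v) (s n)) (φ ∘ J)
      l (range a)ᶜ := by
    simpa only [strongDual_comp] using φ.uniformContinuous.comp_tendstoLocallyUniformlyOn hJ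
  have hφzero : ∃ᶠ z in 𝓝[≠] z₀, (φ ∘ J) z = 0 :=
    hzero.mono fun z hz => by rw [Function.comp_apply, hz, map_zero]
  exact coeff_eq_zero_of_completeSpace ha ha_inj hs hφJ hz₀ hφzero i

end partialFractionSum

theorem coefficients_eq_zero_of_resolvent_series_vanishes_general {ι α X : Type*}
    [AddCommGroup X] [Module ℂ X] [UniformSpace X] [IsUniformAddGroup X] [SeparatingDual ℂ X]
    {μ : ι → ℂ} (hμ : Function.Injective μ) (hμ_cobounded : Tendsto μ cofinite (cobounded ℂ))
    {v : ι → X} {l : Filter α} [l.NeBot] [l.IsCountablyGenerated] {s : α → Finset ι}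
    (hs : ∀ k, ∀ᶠ n in l, k ∈ s n) {J : ℂ → X}
    (hunif : ∀ K ⊆ {η : ℂ | ∀ k, η ≠ -μ k}, IsCompact K →
      TendstoUniformlyOn (fun n η => ∑ k ∈ s n, (η + μ k)⁻¹ • v k) J l K)
    {η₀ : ℂ} (hη₀ : ∀ k, η₀ ≠ -μ k) (hzero : ∃ᶠ η in 𝓝[≠] η₀, J η = 0) (k : ι) :
    v k = 0 := by
  have ha : Tendsto (-μ) cofinite (cobounded ℂ) := by
    simpa only [← tendsto_norm_atTop_iff_cobounded, Pi.neg_apply, norm_neg] using hμ_cobounded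
  have hcompl : {η : ℂ | ∀ k, η ≠ -μ k} = (range (-μ))ᶜ := by
    ext η
    simp only [mem_ofPred_eq, mem_compl_iff, mem_range, Pi.neg_apply, not_exists, ne_comm, ne_eq]
  have hJ : TendstoLocallyUniformlyOn (fun n => partialFractionSum (-μ) v (s n)) J l
      (range (-μ))ᶜ := by
    refine (tendstoLocallyUniformlyOn_iff_forall_isCompact
      (isOpen_compl_range_of_tendsto_cobounded ha)).2 fun K hK hKc => ?_
    simpa only [partialFractionSum.neg_poles] using hunif K (hcompl ▸ hK) hKc
  have hη₀_range : η₀ ∈ (range (-μ))ᶜ := hcompl ▸ hη₀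
  exact partialFractionSum.coeff_eq_zero ha (neg_injective.comp hμ) hs hJ hη₀_range hzero k

lemma tendsto_ofReal_cobounded {ι : Type*} {l : Filter ι} {μ : ι → ℝ} (hμ : Tendsto μ l atTop) :
    Tendsto (fun k => (μ k : ℂ)) l (cobounded ℂ) := by
  rw [← tendsto_norm_atTop_iff_cobounded]
  simpa [Function.comp_def] using tendsto_abs_atTop_atTop.comp hμ

/-- If the series `J(η) = Σ_k v_k / (η + μ_k)` (with `μ_k ↑ ∞` positive) converges on
`D = ℂ \ {-μ_k}`, uniformly on compacts, and `J` vanishes on a nonempty open subset of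
`D`, then all coefficients `v_k` vanish. -/
theorem coefficients_eq_zero_of_resolvent_series_vanishes
    (X : Type*) [NormedAddCommGroup X] [NormedSpace ℂ X] [CompleteSpace X]
    (μ : ℕ → ℝ) (hμ : StrictMono μ) (hμpos : ∀ k, 0 < μ k)
    (hμtop : Tendsto μ atTop atTop) (v : ℕ → X)
    (D : Set ℂ) (hD : D = {η : ℂ | ∀ k, η ≠ -(μ k : ℂ)})
    (hsum : ∀ η ∈ D, Summable fun k : ℕ => (η + (μ k : ℂ))⁻¹ • v k)
    (hunif : ∀ K ⊆ D, IsCompact K →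
      TendstoUniformlyOn
        (fun (N : ℕ) (η : ℂ) => ∑ k ∈ Finset.range N, (η + (μ k : ℂ))⁻¹ • v k)
        (fun η : ℂ => ∑' k : ℕ, (η + (μ k : ℂ))⁻¹ • v k) atTop K)
    (U : Set ℂ) (hUD : U ⊆ D) (hU : U.Nonempty) (hUopen : IsOpen U)
    (hvanish : ∀ η ∈ U, (∑' k : ℕ, (η + (μ k : ℂ))⁻¹ • v k) = 0) :
    ∀ k, v k = 0 := by
  subst hD
  obtain ⟨η₀, hη₀⟩ := hU
  have hzero : ∃ᶠ η in 𝓝[≠] η₀, (∑' k : ℕ, (η + (μ k : ℂ))⁻¹ • v k) = 0 :=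
    (((hUopen.eventually_mem hη₀).mono hvanish).filter_mono nhdsWithin_le_nhds).frequently
  have hrange (k : ℕ) : ∀ᶠ N in atTop, k ∈ Finset.range N := by
    simpa only [Finset.mem_range] using eventually_gt_atTop k
  exact coefficients_eq_zero_of_resolvent_series_vanishes_general
    (Complex.ofReal_injective.comp hμ.injective)
    (Nat.cofinite_eq_atTop ▸ tendsto_ofReal_cobounded hμtop) hrange hunif (hUD hη₀) hzero
end
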